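/- Let l, m ≥ 0 and let (a_i,c_i), i=1..l, and (s_j,u_j), j=1..m, be positive integers with a_i/c_i = s_j/u_j = α ≥ 1 for all i,j, and set a = ∑a_i, s = ∑s_j, with a > s. Then for the central value k = k(x,n) = (αn/2)(1 + x/√n) with |x| ≤ n^{1/4-δ} (0<δ<1/4), the ratio ∏_i C(a_i n + b_i, c_i k + d_i) / ∏_j C(s_j n + t_j, u_j k + v_j) is asymptotically 2^{(a-s)n+(b-t)} · exp(-(a-s)x²/2) · √(S·(π/2)^{m-l}·n^{m-l}/A) uniformly in x as n → ∞, where A = ∏ a_i, S = ∏ s_j, b = ∑b_i, t = ∑t_j. In the special case l = m = 1 (parameters (a,b,c,d) and (s,t,u,v)): C(an+b, ck+d)/C(sn+t, uk+v) ~ 2^{(a-s)n+(b-t)}·exp(-(a-s)x²/2)·√(s/a). -/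

import Mathlib

open Real Filter Finset

/-- Binomial coefficient extended to real arguments via the Gamma function. -/
noncomputable def rchoose (y x : ℝ) : ℝ :=
  Real.Gamma (y + 1) / (Real.Gamma (x + 1) * Real.Gamma (y - x + 1))

open Topology Asymptotics

/-- The main part of Stirling's expansion of `log Γ`. -/
noncomputable def stirlingMain (x : ℝ) : ℝ :=
  (x - 1 / 2) * log x - x + log (2 * π) / 2

theorem tendsto_log_Gamma_natCast_sub_stirlingMain :
    Tendsto (fun n : ℕ => log (Gamma n) - stirlingMain n) atTop (𝓝 0) := by
  have h : Tendsto (fun n : ℕ => log (Stirling.stirlingSeq n) - log (√π)) atTop (𝓝 0) := by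
    have := (Stirling.tendsto_stirlingSeq_sqrt_pi.log (by positivity)).sub_const (log (√π))
    rwa [sub_self] at this
  refine h.congr' ?_
  filter_upwards [eventually_gt_atTop 0] with n hn
  have hn' : (0 : ℝ) < n := by exact_mod_cast hn
  have hG : log (Gamma n) = log (n.factorial : ℝ) - log n := by
    rw [← Real.Gamma_nat_eq_factorial, Real.Gamma_add_one hn'.ne',
      log_mul hn'.ne' (Gamma_pos_of_pos hn').ne']
    ring
  rw [hG, Stirling.log_stirlingSeq_formula, stirlingMain, log_sqrt pi_pos.le,
    log_mul two_ne_zero pi_ne_zero, log_mul two_ne_zero hn'.ne',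
    log_div hn'.ne' (exp_ne_zero 1), log_exp]
  ring

theorem log_Gamma_add_natCast_bounds {n : ℕ} (hn : 2 ≤ n) {r : ℝ} (hr0 : 0 ≤ r) (hr1 : r ≤ 1) :
    r * log (n - 1) ≤ log (Gamma (n + r)) - log (Gamma n) ∧
      log (Gamma (n + r)) - log (Gamma n) ≤ r * log n := by
  rcases hr0.eq_or_lt with rfl | hr
  · simp
  have hfeq : ∀ {y : ℝ}, 0 < y → (log ∘ Gamma) (y + 1) = (log ∘ Gamma) y + log y := by
    intro y hy
    simp only [Function.comp_apply]
    rw [Gamma_add_one hy.ne', log_mul hy.ne' (Gamma_pos_of_pos hy).ne', add_comm]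
  have h1 := BohrMollerup.f_add_nat_le convexOn_log_Gamma hfeq (by lia : n ≠ 0) hr hr1
  have h2 := BohrMollerup.f_add_nat_ge convexOn_log_Gamma hfeq hn hr
  simp only [Function.comp_apply] at h1 h2
  constructor <;> linarith

theorem stirlingMain_add_bounds {n r : ℝ} (hn : 1 ≤ n) (hr0 : 0 ≤ r) (hr1 : r ≤ 1) :
    |stirlingMain n + r * log n - stirlingMain (n + r)| ≤ 1 / n := by
  have hn0 : 0 < n := by linarith
  have hx0 : 0 < n + r := by linarith
  have hlog : log (n + r) = log n + log ((n + r) / n) := by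
    rw [log_div hx0.ne' hn0.ne']; ring
  have hq : 0 < (n + r) / n := by positivity
  have h1 := log_le_sub_one_of_pos hq
  have h2 := one_sub_inv_le_log_of_pos hq
  have e : stirlingMain n + r * log n - stirlingMain (n + r)
      = r - (n + r - 1 / 2) * log ((n + r) / n) := by
    simp only [stirlingMain, hlog]; ring
  have h3 : (n + r - 1 / 2) * log ((n + r) / n) ≤ (n + r - 1 / 2) * ((n + r) / n - 1) :=
    mul_le_mul_of_nonneg_left h1 (by linarith)
  have h4 : (n + r - 1 / 2) * (1 - ((n + r) / n)⁻¹) ≤ (n + r - 1 / 2) * log ((n + r) / n) :=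
    mul_le_mul_of_nonneg_left h2 (by linarith)
  have e3 : (n + r - 1 / 2) * ((n + r) / n - 1) = r + (r ^ 2 - r / 2) * (1 / n) := by
    field_simp; ring
  have e4 : (n + r - 1 / 2) * (1 - ((n + r) / n)⁻¹) = r - r / 2 * (1 / (n + r)) := by
    field_simp; ring
  have h5 : 1 / (n + r) ≤ 1 / n := one_div_le_one_div_of_le hn0 (by linarith)
  have h6 : 0 < 1 / n := by positivity
  have h7 : 0 < 1 / (n + r) := by positivity
  have h8 := mul_le_mul_of_nonneg_right (show r ^ 2 - r / 2 ≤ 1 by nlinarith) h6.le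
  rw [e, abs_le]
  constructor
  · linarith
  · nlinarith

/-- **Stirling's formula** for the Gamma function at real arguments. -/
theorem tendsto_log_Gamma_sub_stirlingMain :
    Tendsto (fun x : ℝ => log (Gamma x) - stirlingMain x) atTop (𝓝 0) := by
  have hfl : Tendsto (fun x : ℝ => ⌊x⌋₊) atTop atTop := tendsto_nat_floor_atTop
  have hlog : Tendsto (fun n : ℕ => log ((n : ℝ) - 1) - log n) atTop (𝓝 0) := by
    have h : Tendsto (fun n : ℕ => log (1 - 1 / (n : ℝ))) atTop (𝓝 0) := by
      have := (tendsto_one_div_atTop_nhds_zero_nat (𝕜 := ℝ)).const_sub 1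
      have := this.log (by norm_num)
      simpa using this
    refine h.congr' ?_
    filter_upwards [eventually_ge_atTop 2] with n hn
    have hn' : (2 : ℝ) ≤ n := by exact_mod_cast hn
    rw [← log_div (by linarith) (by linarith)]
    congr 1
    field_simp
  have hlim : Tendsto (fun n : ℕ => |log (Gamma n) - stirlingMain n|
      + |log ((n : ℝ) - 1) - log n| + 1 / (n : ℝ)) atTop (𝓝 0) := by
    simpa using (tendsto_log_Gamma_natCast_sub_stirlingMain.abs.add hlog.abs).add
      (tendsto_one_div_atTop_nhds_zero_nat (𝕜 := ℝ))
  refine squeeze_zero_norm' ?_ (hlim.comp hfl)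
  filter_upwards [eventually_ge_atTop 2] with x hx
  have hn : 2 ≤ ⌊x⌋₊ := Nat.le_floor (by exact_mod_cast hx)
  have hle := Nat.floor_le (by linarith : 0 ≤ x)
  have hlt := Nat.lt_floor_add_one x
  simp only [Function.comp_apply, Real.norm_eq_abs]
  generalize ⌊x⌋₊ = n at *
  obtain ⟨r, rfl⟩ : ∃ r, x = n + r := ⟨x - n, by ring⟩
  have hr0 : 0 ≤ r := by linarith
  have hr1 : r ≤ 1 := by linarith
  have hn' : (2 : ℝ) ≤ n := by exact_mod_cast hn
  obtain ⟨h1, h2⟩ := log_Gamma_add_natCast_bounds hn hr0 hr1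
  have h3 := abs_le.1 (stirlingMain_add_bounds (by linarith : (1 : ℝ) ≤ n) hr0 hr1)
  have h4 : log ((n : ℝ) - 1) ≤ log n := log_le_log (by linarith) (by linarith)
  have h5 := neg_abs_le (log ((n : ℝ) - 1) - log n)
  have h6 := neg_abs_le (log (Gamma n) - stirlingMain n)
  have h7 := le_abs_self (log (Gamma n) - stirlingMain n)
  have h8 := abs_nonneg (log ((n : ℝ) - 1) - log n)
  rw [abs_le]
  constructor
  · nlinarith
  · nlinarith

/-- The Taylor remainder of `(1 + p) * log (1 + p)` is of fourth order. -/
theorem isBigO_one_add_mul_log_one_add :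
    (fun p : ℝ => (1 + p) * log (1 + p) - (p + p ^ 2 / 2 - p ^ 3 / 6))
      =O[𝓝 0] fun p => p ^ 4 := by
  refine IsBigO.of_bound 4 ?_
  have hev : ∀ᶠ p : ℝ in 𝓝 0, |p| < 1 / 2 := by
    have := Metric.ball_mem_nhds (0 : ℝ) (by norm_num : (0 : ℝ) < 1 / 2)
    filter_upwards [this] with p hp
    simpa using hp
  filter_upwards [hev] with p hp
  have h := abs_log_sub_add_sum_range_le (x := -p) (by rw [abs_neg]; linarith) 3
  have h' : |p| ^ 4 / (1 - |p|) ≤ 2 * |p| ^ 4 := by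
    rw [div_le_iff₀ (by linarith)]
    nlinarith [pow_nonneg (abs_nonneg p) 4]
  have hL : |log (1 + p) - (p - p ^ 2 / 2 + p ^ 3 / 3)| ≤ 2 * |p| ^ 4 := by
    refine le_trans (le_of_eq ?_) (h.trans (by simpa using h'))
    simp [Finset.sum_range_succ]
    ring_nf
  have e : (1 + p) * log (1 + p) - (p + p ^ 2 / 2 - p ^ 3 / 6)
      = (1 + p) * (log (1 + p) - (p - p ^ 2 / 2 + p ^ 3 / 3)) + p ^ 4 / 3 := by ring
  have h1p : |1 + p| ≤ 3 / 2 := by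
    have := abs_add_le 1 p
    rw [abs_one] at this
    linarith
  rw [e, Real.norm_eq_abs, Real.norm_eq_abs, abs_pow]
  refine (abs_add_le _ _).trans ?_
  rw [abs_mul, abs_div, abs_pow, abs_of_pos (by norm_num : (0 : ℝ) < 3)]
  have := mul_le_mul h1p hL (abs_nonneg _) (by norm_num)
  nlinarith [pow_nonneg (abs_nonneg p) 4]

theorem tendsto_mul_one_add_mul_log_remainder {ι : Type*} {F : Filter ι} {N p : ι → ℝ}
    (hp : Tendsto p F (𝓝 0)) (h4 : Tendsto (fun i => N i * p i ^ 4) F (𝓝 0)) :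
    Tendsto (fun i => N i * ((1 + p i) * log (1 + p i) - (p i + p i ^ 2 / 2 - p i ^ 3 / 6)))
      F (𝓝 0) :=
  ((isBigO_refl N F).mul (isBigO_one_add_mul_log_one_add.comp_tendsto hp)).trans_tendsto h4

theorem tendsto_mul_add_mul_inv_pow_four {ι : Type*} {F : Filter ι} {N ξ : ι → ℝ}
    (hN : Tendsto N F atTop) (hξ : Tendsto ξ F (𝓝 0))
    (h4 : Tendsto (fun i => N i * ξ i ^ 4) F (𝓝 0)) (A : ℝ) :
    Tendsto (fun i => N i * (ξ i + A * (N i)⁻¹) ^ 4) F (𝓝 0) := by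
  have hρ : Tendsto (fun i => (N i)⁻¹) F (𝓝 0) := tendsto_inv_atTop_zero.comp hN
  have h : Tendsto (fun i => N i * ξ i ^ 4 + (4 * A * ξ i ^ 3 + 6 * A ^ 2 * ξ i ^ 2 * (N i)⁻¹
      + 4 * A ^ 3 * ξ i * (N i)⁻¹ ^ 2 + A ^ 4 * (N i)⁻¹ ^ 3)) F (𝓝 0) := by
    have hc : Continuous fun z : ℝ × ℝ => 4 * A * z.1 ^ 3 + 6 * A ^ 2 * z.1 ^ 2 * z.2
      + 4 * A ^ 3 * z.1 * z.2 ^ 2 + A ^ 4 * z.2 ^ 3 := by fun_prop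
    simpa using h4.add ((hc.tendsto (0, 0)).comp (hξ.prodMk_nhds hρ))
  refine h.congr' ?_
  filter_upwards [hN.eventually_gt_atTop 0] with i hi
  field_simp
  ring

theorem log_eq_log_add_log_one_add {N y p : ℝ} (hN : 0 < N) (hp : 0 < 1 + p)
    (hy : y = N * (1 + p)) : log y = log N + log (1 + p) := by
  rw [hy, log_mul hN.ne' hp.ne']

/-- The Stirling approximation of a central binomial coefficient, in logarithmic form. -/
theorem tendsto_stirlingMain_binomial {ι : Type*} {F : Filter ι} {N ξ : ι → ℝ}
    (hN : Tendsto N F atTop) (hξ : Tendsto ξ F (𝓝 0))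
    (h4 : Tendsto (fun i => N i * ξ i ^ 4) F (𝓝 0)) (β γ : ℝ) :
    Tendsto (fun i => stirlingMain (2 * N i + β + 1) - stirlingMain (N i * (1 + ξ i) + γ + 1)
      - stirlingMain (2 * N i + β - (N i * (1 + ξ i) + γ) + 1)
      - ((2 * N i + β) * log 2 - N i * ξ i ^ 2 - log (π * N i) / 2)) F (𝓝 0) := by
  have hρ : Tendsto (fun i => (N i)⁻¹) F (𝓝 0) := tendsto_inv_atTop_zero.comp hN
  have hr : Tendsto (fun i => 0 + (β + 1) / 2 * (N i)⁻¹) F (𝓝 0) := by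
    simpa using hρ.const_mul ((β + 1) / 2)
  have hp : Tendsto (fun i => ξ i + (γ + 1) * (N i)⁻¹) F (𝓝 0) := by
    simpa using hξ.add (hρ.const_mul (γ + 1))
  have hq : Tendsto (fun i => -ξ i + (β - γ + 1) * (N i)⁻¹) F (𝓝 0) := by
    simpa using hξ.neg.add (hρ.const_mul (β - γ + 1))
  have gr := tendsto_mul_one_add_mul_log_remainder hr
    (tendsto_mul_add_mul_inv_pow_four hN (ξ := fun _ => 0) tendsto_const_nhds
      (by simp [tendsto_const_nhds]) _)
  have gp := tendsto_mul_one_add_mul_log_remainder hp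
    (tendsto_mul_add_mul_inv_pow_four hN hξ h4 _)
  have gq := tendsto_mul_one_add_mul_log_remainder hq
    (tendsto_mul_add_mul_inv_pow_four hN (ξ := fun i => -ξ i) (by simpa using hξ.neg)
      (by simpa [Even.neg_pow (by decide : Even 4)] using h4) _)
  have hlog : ∀ {p : ι → ℝ}, Tendsto p F (𝓝 0) → Tendsto (fun i => log (1 + p i)) F (𝓝 0) := by
    intro p hp
    have := (hp.const_add 1).log (by norm_num)
    simpa using this
  have hpoly : Tendsto (fun i => (β + 1) ^ 2 * (N i)⁻¹ / 4 - (β + 1) ^ 3 * (N i)⁻¹ ^ 2 / 24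
      - (ξ i * ((γ + 1) - (β - γ + 1)) + ((γ + 1) ^ 2 + (β - γ + 1) ^ 2) * (N i)⁻¹ / 2)
      + (β + 2) * ((ξ i + (γ + 1) * (N i)⁻¹) ^ 2
        - (ξ i + (γ + 1) * (N i)⁻¹) * (-ξ i + (β - γ + 1) * (N i)⁻¹)
        + (-ξ i + (β - γ + 1) * (N i)⁻¹) ^ 2) / 6) F (𝓝 0) := by
    have hc : Continuous fun z : ℝ × ℝ => (β + 1) ^ 2 * z.2 / 4 - (β + 1) ^ 3 * z.2 ^ 2 / 24
      - (z.1 * ((γ + 1) - (β - γ + 1)) + ((γ + 1) ^ 2 + (β - γ + 1) ^ 2) * z.2 / 2)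
      + (β + 2) * ((z.1 + (γ + 1) * z.2) ^ 2
        - (z.1 + (γ + 1) * z.2) * (-z.1 + (β - γ + 1) * z.2)
        + (-z.1 + (β - γ + 1) * z.2) ^ 2) / 6 := by fun_prop
    simpa [Function.comp_def] using (hc.tendsto (0, 0)).comp (hξ.prodMk_nhds hρ)
  have key := (((gr.const_mul 2).sub gp).sub gq).add
    ((((hlog hp).add (hlog hq)).sub (hlog hr)).div_const 2) |>.add hpoly
  simp only [mul_zero, sub_zero, add_zero, zero_div] at key
  refine key.congr' ?_
  have hev : ∀ {p : ι → ℝ}, Tendsto p F (𝓝 0) → ∀ᶠ i in F, 0 < 1 + p i := by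
    intro p hp
    filter_upwards [hp.eventually_const_lt (by norm_num : (-1 : ℝ) < 0)] with i hi
    linarith
  filter_upwards [hN.eventually_gt_atTop 0, hev hr, hev hp, hev hq] with i hNi hri hpi hqi
  have hNρ : N i * (N i)⁻¹ = 1 := mul_inv_cancel₀ hNi.ne'
  simp only [stirlingMain]
  rw [log_eq_log_add_log_one_add (N := 2 * N i) (by positivity) hri
      (show 2 * N i + β + 1 = _ by linear_combination (-(β + 1)) * hNρ),
    log_eq_log_add_log_one_add hNi hpi
      (show N i * (1 + ξ i) + γ + 1 = _ by linear_combination (-(γ + 1)) * hNρ),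
    log_eq_log_add_log_one_add hNi hqi
      (show 2 * N i + β - (N i * (1 + ξ i) + γ) + 1 = _ by
        linear_combination (-(β - γ + 1)) * hNρ),
    log_mul two_ne_zero hNi.ne', log_mul two_ne_zero pi_ne_zero, log_mul pi_ne_zero hNi.ne']
  generalize log (1 + (0 + (β + 1) / 2 * (N i)⁻¹)) = L1
  generalize log (1 + (ξ i + (γ + 1) * (N i)⁻¹)) = L2
  generalize log (1 + (-ξ i + (β - γ + 1) * (N i)⁻¹)) = L3
  field_simp
  ring

/-- The local limit theorem for a single binomial coefficient near its central value. -/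
theorem tendsto_rchoose_div {ι : Type*} {F : Filter ι} {N ξ : ι → ℝ}
    (hN : Tendsto N F atTop) (hξ : Tendsto ξ F (𝓝 0))
    (h4 : Tendsto (fun i => N i * ξ i ^ 4) F (𝓝 0)) (β γ : ℝ) :
    Tendsto (fun i => rchoose (2 * N i + β) (N i * (1 + ξ i) + γ) /
      ((2 : ℝ) ^ (2 * N i + β) * exp (-(N i * ξ i ^ 2)) / √(π * N i))) F (𝓝 1) := by
  have hY : Tendsto (fun i => 2 * N i + β + 1) F atTop :=
    tendsto_atTop_add_const_right _ _ (tendsto_atTop_add_const_right _ _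
      (hN.const_mul_atTop two_pos))
  have hX : Tendsto (fun i => N i * (1 + ξ i) + γ + 1) F atTop :=
    tendsto_atTop_add_const_right _ _ (tendsto_atTop_add_const_right _ _
      (hN.atTop_mul_pos one_pos (by simpa using hξ.const_add 1)))
  have hZ : Tendsto (fun i => 2 * N i + β - (N i * (1 + ξ i) + γ) + 1) F atTop := by
    have h : Tendsto (fun i => N i * (1 - ξ i) + (β - γ + 1)) F atTop :=
      tendsto_atTop_add_const_right _ _
        (hN.atTop_mul_pos one_pos (by simpa using hξ.const_sub 1))
    exact h.congr fun i => by ring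
  have hG := tendsto_log_Gamma_sub_stirlingMain
  have key := (((hG.comp hY).sub (hG.comp hX)).sub (hG.comp hZ)).add
    (tendsto_stirlingMain_binomial hN hξ h4 β γ)
  simp only [sub_zero, add_zero] at key
  have hexp := (continuous_exp.tendsto 0).comp key
  rw [exp_zero] at hexp
  refine hexp.congr' ?_
  filter_upwards [hN.eventually_gt_atTop 0, hY.eventually_gt_atTop 0, hX.eventually_gt_atTop 0,
    hZ.eventually_gt_atTop 0] with i hNi hYi hXi hZi
  have gY := Gamma_pos_of_pos hYi
  have gX := Gamma_pos_of_pos hXi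
  have gZ := Gamma_pos_of_pos hZi
  have hpos : 0 < rchoose (2 * N i + β) (N i * (1 + ξ i) + γ) /
      ((2 : ℝ) ^ (2 * N i + β) * exp (-(N i * ξ i ^ 2)) / √(π * N i)) := by
    unfold rchoose
    positivity
  rw [← exp_log hpos]
  simp only [Function.comp_apply]
  congr 1
  unfold rchoose
  rw [log_div (by positivity) (by positivity), log_div gY.ne' (by positivity),
    log_mul gX.ne' gZ.ne', log_div (by positivity) (by positivity),
    log_mul (rpow_pos_of_pos two_pos _).ne' (exp_ne_zero _), log_rpow two_pos, log_exp, log_sqrt (by positivity)]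
  ring

theorem prod_central_approx {l : ℕ} (a : Fin l → ℕ) (b : Fin l → ℤ) {n : ℝ} (hn : 0 < n) (x : ℝ) :
    ∏ i, ((2 : ℝ) ^ (2 * ((a i : ℝ) * n / 2) + b i) *
        exp (-((a i : ℝ) * n / 2 * (x / √n) ^ 2)) / √(π * ((a i : ℝ) * n / 2))) =
      (2 : ℝ) ^ ((∑ i, (a i : ℝ)) * n + ∑ i, (b i : ℝ)) * exp (-((∑ i, (a i : ℝ)) * x ^ 2 / 2)) /
        √((∏ i, (a i : ℝ)) * (π / 2 * n) ^ l) := by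
  rw [prod_div_distrib, prod_mul_distrib, ← rpow_sum_of_pos two_pos, ← exp_sum,
    ← sqrt_prod _ fun i _ => by positivity]
  congr 3
  · rw [sum_add_distrib, sum_mul]
    congr 1
    exact sum_congr rfl fun i _ => by ring
  · rw [sum_mul, sum_div, ← sum_neg_distrib]
    refine sum_congr rfl fun i _ => ?_
    rw [div_pow, sq_sqrt hn.le]
    field_simp
  · rw [← Fin.prod_const, ← prod_mul_distrib]
    exact prod_congr rfl fun i _ => by ring

/-- The indices `(n, x)` with `n → ∞` and `|x| ≤ n ^ (1 / 4 - δ)`: convergence along this filter is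
convergence as `n → ∞`, uniformly in `x`. -/
def centralFilter (δ : ℝ) : Filter (ℕ × ℝ) :=
  comap Prod.fst atTop ⊓ 𝓟 {z | |z.2| ≤ (z.1 : ℝ) ^ ((1 : ℝ) / 4 - δ)}

theorem eventually_centralFilter {δ : ℝ} {P : ℕ × ℝ → Prop} :
    (∀ᶠ z in centralFilter δ, P z) ↔
      ∃ N : ℕ, ∀ n : ℕ, N ≤ n → ∀ x : ℝ, |x| ≤ (n : ℝ) ^ ((1 : ℝ) / 4 - δ) → P (n, x) := by
  rw [centralFilter, eventually_inf_principal, eventually_comap, eventually_atTop]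
  constructor
  · rintro ⟨N, h⟩
    exact ⟨N, fun n hn x hx => h n hn (n, x) rfl hx⟩
  · rintro ⟨N, h⟩
    refine ⟨N, fun n hn z hz hx => ?_⟩
    subst hz
    exact h _ hn _ hx

theorem tendsto_fst_centralFilter (δ : ℝ) :
    Tendsto (fun z : ℕ × ℝ => (z.1 : ℝ)) (centralFilter δ) atTop :=
  tendsto_natCast_atTop_atTop.comp (tendsto_comap.mono_left inf_le_left)

theorem eventually_abs_div_sqrt_le (δ : ℝ) :
    ∀ᶠ z in centralFilter δ, |z.2 / √(z.1 : ℝ)| ≤ (z.1 : ℝ) ^ (-(1 / 4 + δ)) := by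
  refine eventually_centralFilter.2 ⟨1, fun n hn x hx => ?_⟩
  have hn' : (0 : ℝ) < n := by exact_mod_cast hn
  rw [abs_div, abs_of_nonneg (sqrt_nonneg _), div_le_iff₀ (sqrt_pos.2 hn'), sqrt_eq_rpow,
    ← rpow_add hn']
  refine hx.trans_eq ?_
  congr 1
  ring

theorem tendsto_div_sqrt_centralFilter {δ : ℝ} (hδ : 0 < δ) :
    Tendsto (fun z : ℕ × ℝ => z.2 / √(z.1 : ℝ)) (centralFilter δ) (𝓝 0) :=
  squeeze_zero_norm' (eventually_abs_div_sqrt_le δ)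
    ((tendsto_rpow_neg_atTop (by positivity)).comp (tendsto_fst_centralFilter δ))

theorem tendsto_mul_div_sqrt_pow_four_centralFilter {δ : ℝ} (hδ : 0 < δ) :
    Tendsto (fun z : ℕ × ℝ => (z.1 : ℝ) * (z.2 / √(z.1 : ℝ)) ^ 4) (centralFilter δ) (𝓝 0) := by
  refine squeeze_zero_norm' ?_
    ((tendsto_rpow_neg_atTop (by positivity : 0 < 4 * δ)).comp (tendsto_fst_centralFilter δ))
  filter_upwards [eventually_abs_div_sqrt_le δ,
    (tendsto_fst_centralFilter δ).eventually_gt_atTop 0] with z hz hn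
  have h := pow_le_pow_left₀ (abs_nonneg _) hz 4
  rw [norm_mul, norm_pow, Real.norm_eq_abs, Real.norm_eq_abs, abs_of_pos hn]
  refine (mul_le_mul_of_nonneg_left h hn.le).trans_eq ?_
  rw [Function.comp_apply, ← rpow_mul_natCast hn.le, ← rpow_one_add' hn.le]
  · congr 1
    push_cast
    ring
  · push_cast
    intro h0
    linarith

theorem tendsto_prod_rchoose_div {l : ℕ} {a c : Fin l → ℕ} (b d : Fin l → ℤ)
    (ha : ∀ i, 0 < a i) (hc : ∀ i, 0 < c i) {α : ℝ} (hac : ∀ i, (a i : ℝ) / (c i : ℝ) = α)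
    {δ : ℝ} (hδ : 0 < δ) :
    Tendsto (fun z : ℕ × ℝ => (∏ i, rchoose ((a i : ℝ) * z.1 + (b i : ℝ))
        ((c i : ℝ) * (α * z.1 / 2 * (1 + z.2 / √z.1)) + (d i : ℝ))) /
      ((2 : ℝ) ^ ((∑ i, (a i : ℝ)) * z.1 + ∑ i, (b i : ℝ)) *
        exp (-((∑ i, (a i : ℝ)) * z.2 ^ 2 / 2)) /
        √((∏ i, (a i : ℝ)) * (π / 2 * z.1) ^ l))) (centralFilter δ) (𝓝 1) := by
  have key : Tendsto (fun z : ℕ × ℝ => ∏ i, (rchoose (2 * ((a i : ℝ) * z.1 / 2) + (b i : ℝ))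
        ((a i : ℝ) * z.1 / 2 * (1 + z.2 / √z.1) + (d i : ℝ)) /
      ((2 : ℝ) ^ (2 * ((a i : ℝ) * z.1 / 2) + b i) *
        exp (-((a i : ℝ) * z.1 / 2 * (z.2 / √z.1) ^ 2)) / √(π * ((a i : ℝ) * z.1 / 2)))))
      (centralFilter δ) (𝓝 (∏ _i : Fin l, 1)) := by
    refine tendsto_finsetProd _ fun i _ => tendsto_rchoose_div ?_
      (tendsto_div_sqrt_centralFilter hδ) ?_ _ _
    · exact ((tendsto_fst_centralFilter δ).const_mul_atTop
        (by exact_mod_cast ha i)).atTop_div_const two_pos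
    · simpa using ((tendsto_mul_div_sqrt_pow_four_centralFilter hδ).const_mul
        ((a i : ℝ) / 2)).congr fun z => by ring
  rw [prod_const_one] at key
  refine key.congr' ?_
  filter_upwards [(tendsto_fst_centralFilter δ).eventually_gt_atTop 0] with z hn
  rw [prod_div_distrib, prod_central_approx a b hn]
  congr 1
  refine prod_congr rfl fun i _ => ?_
  have hci : (c i : ℝ) ≠ 0 := by exact_mod_cast (hc i).ne'
  congr 1
  · ring
  · rw [← hac i]
    field_simp

theorem central_approx_div_central_approx {A S B T P Q n x : ℝ} (hP : 0 < P) (hQ : 0 < Q)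
    (hn : 0 < n) (l m : ℕ) :
    (2 : ℝ) ^ (A * n + B) * exp (-(A * x ^ 2 / 2)) / √(P * (π / 2 * n) ^ l) /
        ((2 : ℝ) ^ (S * n + T) * exp (-(S * x ^ 2 / 2)) / √(Q * (π / 2 * n) ^ m)) =
      (2 : ℝ) ^ ((A - S) * n + (B - T)) * exp (-(A - S) * x ^ 2 / 2) *
        √(Q * (π / 2) ^ ((m : ℝ) - l) * n ^ ((m : ℝ) - l) / P) := by
  have h1 : (2 : ℝ) ^ ((A - S) * n + (B - T)) = (2 : ℝ) ^ (A * n + B) / (2 : ℝ) ^ (S * n + T) := by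
    rw [← rpow_sub two_pos]
    congr 1
    ring
  have h2 : exp (-(A - S) * x ^ 2 / 2) = exp (-(A * x ^ 2 / 2)) / exp (-(S * x ^ 2 / 2)) := by
    rw [← exp_sub]
    congr 1
    ring
  have hπ : 0 < π / 2 := by positivity
  have h3 : √(Q * (π / 2) ^ ((m : ℝ) - l) * n ^ ((m : ℝ) - l) / P) =
      √(Q * (π / 2 * n) ^ m) / √(P * (π / 2 * n) ^ l) := by
    rw [← sqrt_div (by positivity), mul_assoc Q, ← mul_rpow hπ.le hn.le,
      rpow_sub (by positivity), rpow_natCast, rpow_natCast]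
    congr 1
    field_simp
  rw [h1, h2, h3, div_div_div_eq]
  simp only [div_eq_mul_inv, mul_inv]
  ring

/-- Local limit theorem for ratios of products of binomial coefficients: for
`k = (αn/2)(1 + x/√n)` with `|x| ≤ n^{1/4-δ}`, the ratio
`∏ C(aᵢn+bᵢ, cᵢk+dᵢ)/∏ C(sⱼn+tⱼ, uⱼk+vⱼ)` is asymptotic, uniformly in `x`, to
`2^{(a-s)n+(b-t)}·exp(-(a-s)x²/2)·√(S·(π/2)^{m-l}·n^{m-l}/A)`. -/
theorem local_limit_binomials
    (l m : ℕ) (a c : Fin l → ℕ) (b d : Fin l → ℤ)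
    (s u : Fin m → ℕ) (t v : Fin m → ℤ)
    (ha : ∀ i, 0 < a i) (hc : ∀ i, 0 < c i)
    (hs : ∀ j, 0 < s j) (hu : ∀ j, 0 < u j)
    (α : ℝ) (hα : 1 ≤ α)
    (hac : ∀ i, (a i : ℝ) / (c i : ℝ) = α)
    (hsu : ∀ j, (s j : ℝ) / (u j : ℝ) = α)
    (hgt : ∑ j, s j < ∑ i, a i)
    (δ : ℝ) (hδ0 : 0 < δ) (hδ1 : δ < 1/4) :
    ∀ ε > 0, ∃ N : ℕ, ∀ n : ℕ, N ≤ n → ∀ x : ℝ,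
      |x| ≤ (n : ℝ) ^ ((1 : ℝ)/4 - δ) →
      |((∏ i, rchoose ((a i : ℝ) * n + (b i : ℝ))
            ((c i : ℝ) * (α * n / 2 * (1 + x / Real.sqrt n)) + (d i : ℝ))) /
          (∏ j, rchoose ((s j : ℝ) * n + (t j : ℝ))
            ((u j : ℝ) * (α * n / 2 * (1 + x / Real.sqrt n)) + (v j : ℝ)))) /
        ((2 : ℝ) ^ (((∑ i, (a i : ℝ)) - ∑ j, (s j : ℝ)) * n
              + ((∑ i, (b i : ℝ)) - ∑ j, (t j : ℝ))) *
          Real.exp (-((∑ i, (a i : ℝ)) - ∑ j, (s j : ℝ)) * x ^ 2 / 2) *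
          Real.sqrt ((∏ j, (s j : ℝ)) * (π / 2) ^ ((m : ℝ) - l) *
            (n : ℝ) ^ ((m : ℝ) - l) / (∏ i, (a i : ℝ)))) - 1| ≤ ε := by
  intro ε hε
  have hA : (0 : ℝ) < ∏ i, (a i : ℝ) := prod_pos fun i _ => by exact_mod_cast ha i
  have hS : (0 : ℝ) < ∏ j, (s j : ℝ) := prod_pos fun j _ => by exact_mod_cast hs j
  have h := (tendsto_prod_rchoose_div b d ha hc hac hδ0).div
    (tendsto_prod_rchoose_div t v hs hu hsu hδ0) one_ne_zero
  rw [div_one] at h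
  obtain ⟨N, hN⟩ := eventually_centralFilter.1
    (((tendsto_fst_centralFilter δ).eventually_gt_atTop 0).and
      (h.eventually (Metric.closedBall_mem_nhds 1 hε)))
  refine ⟨N, fun n hn x hx => ?_⟩
  obtain ⟨hn0, hz⟩ := hN n hn x hx
  replace hn0 : (0 : ℝ) < n := hn0
  rw [Real.dist_eq] at hz
  rw [← central_approx_div_central_approx hA hS hn0, div_div_div_comm]
  exact hz
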